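/- arXiv:2509.04287 — 3 statements merged into one kernel-verified Lean document; each statement's English description precedes it below -/
import Mathlib

section
/- Let U ⊆ ℂ be open and connected, let a < b, let γ : [a,b] → U be absolutely continuous (i.e., γ(s) = γ(a) + ∫_a^s g(u) du for all s ∈ [a,b] for some Lebesgue-integrable g : [a,b] → ℂ, so g = γ' almost everywhere), and let f : U → ℂ be continuous. Then the Riemann–Stieltjes sums of f along γ converge to the Lebesgue integral ∫_a^b f(γ(s)) γ'(s) ds: for every ε > 0 there exists δ > 0 such that for every partition a = t₀ < t₁ < … < t_n = b with max_j (t_j − t_{j−1}) < δ and every choice of tags t_j^* ∈ [t_{j−1}, t_j], one has | Σ_{j=1}^n f(γ(t_j^*)) (γ(t_j) − γ(t_{j−1})) − ∫_a^b f(γ(s)) γ'(s) ds | < ε. -/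
/-!
The path `γ` is a primitive of `g`, hence continuous, so `h = f ∘ γ` is uniformly continuous on
`[a, b]`. Since `γ(t_j) - γ(t_{j-1}) = ∫ g` over the `j`-th subinterval, the difference between the
Riemann–Stieltjes sum and `∫ h g` is `∑_j ∫_{t_{j-1}}^{t_j} (h(t_j^*) - h(s)) g(s) ds`. For a mesh
below the modulus of continuity of `h` at `η = ε / (‖g‖₁ + 1)`, its norm is at most
`η ‖g‖₁ < ε`. This estimate is `riemannStieltjes_aux`.
-/

open MeasureTheory
open scoped ENNReal NNReal BigOperators Classical

noncomputable section

namespace GibbsPP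

variable {𝕏 : Type*}

/-- A potential: for each arity `k`, a symmetric function on `k`-tuples with values in
`ℝ ∪ {∞} ⊆ EReal` (the value `⊥ = -∞` is excluded by `IsPotential`). -/
abbrev Potential (𝕏 : Type*) : Type _ := ∀ k : ℕ, (Fin k → 𝕏) → EReal

/-- The subtuple `x_S` of a tuple `x` indexed by the finite set `S`. -/
def subtuple {k : ℕ} (x : Fin k → 𝕏) (S : Finset (Fin k)) : Fin S.card → 𝕏 :=
  fun i => x (S.orderIsoOfFin rfl i).1

/-- `φ` is an honest potential: it never takes the value `-∞` (so its values lie in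
`ℝ ∪ {∞}`) and each `φ_k` is measurable. -/
def IsPotential [MeasurableSpace 𝕏] (φ : Potential 𝕏) : Prop :=
  (∀ (k : ℕ) (x : Fin k → 𝕏), φ k x ≠ ⊥) ∧ ∀ k : ℕ, Measurable (φ k)

/-- Symmetry of a potential under permutations of the coordinates. -/
def IsSymmetric (φ : Potential 𝕏) : Prop :=
  ∀ (k : ℕ) (π : Equiv.Perm (Fin k)) (x : Fin k → 𝕏), φ k (x ∘ π) = φ k x

/-- A potential is repulsive if all its values are nonnegative. -/
def Repulsive (φ : Potential 𝕏) : Prop := ∀ (k : ℕ) (x : Fin k → 𝕏), 0 ≤ φ k x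

/-- `φ` has range at most `R`: `φ_k` vanishes on tuples of diameter greater than `R`. -/
def HasRange [PseudoMetricSpace 𝕏] (φ : Potential 𝕏) (R : ℝ) : Prop :=
  ∀ (k : ℕ) (x : Fin k → 𝕏), (∃ i j, R < dist (x i) (x j)) → φ k x = 0

/-- The Hamiltonian `H(x) = ∑_{∅ ≠ S ⊆ [k]} φ(x_S)`. -/
def hamiltonian (φ : Potential 𝕏) {k : ℕ} (x : Fin k → 𝕏) : EReal :=
  ∑ S ∈ Finset.univ.powerset.erase (∅ : Finset (Fin k)), φ S.card (subtuple x S)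

/-- `expNeg H = e^{-H}`, with `e^{-∞} = 0`. -/
def expNeg (H : EReal) : ℝ := if H = ⊤ then 0 else Real.exp (-H.toReal)

/-- The pinned potential `φ(· | x)`, given by `φ(y | x) = ∑_{S ⊆ [k]} φ(y, x_S)`. -/
def pin (φ : Potential 𝕏) {k : ℕ} (x : Fin k → 𝕏) : Potential 𝕏 :=
  fun m y => ∑ S ∈ (Finset.univ : Finset (Fin k)).powerset,
    φ (m + S.card) (Fin.append y (subtuple x S))

/-- The ordering function `D(x₁, …, x_k) = ∑_j d(z, x_j)` (for a fixed base point `z`). -/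
def D [PseudoMetricSpace 𝕏] (z : 𝕏) {k : ℕ} (x : Fin k → 𝕏) : ℝ := ∑ j, dist z (x j)

/-- The partially pinned potential `φ(· | y_{≺ t})`: the pinning at `y` is imposed exactly on
tuples `w` with `D(w) < t`, where `t ∈ [0, ∞]`. -/
def partialPin [PseudoMetricSpace 𝕏] (z : 𝕏) (φ : Potential 𝕏) (y : 𝕏) (t : ℝ≥0∞) :
    Potential 𝕏 :=
  fun m w =>
    if ENNReal.ofReal (D z w) < t then pin φ (fun _ : Fin 1 => y) m w else φ m w

/-- The potential obtained from `φ` by replacing the one-body term by `∞` on `Δ`. -/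
def restrictOne (φ : Potential 𝕏) (Δ : Set 𝕏) : Potential 𝕏 :=
  fun m x => if m = 1 ∧ ∀ i, x i ∈ Δ then ⊤ else φ m x

/-- The first `j` entries of a `k`-tuple (`j ≤ k`). -/
def firstN {k : ℕ} (x : Fin k → 𝕏) {j : ℕ} (h : j ≤ k) : Fin j → 𝕏 :=
  fun i => x (Fin.castLE h i)

section Meas
variable [MeasurableSpace 𝕏]

/-- Assumption (A): for every `x`, the pushforward of `ν` under `y ↦ d(x,y)` is absolutely
continuous with respect to Lebesgue measure on `ℝ`. -/
def AssumptionA [PseudoMetricSpace 𝕏] (ν : Measure 𝕏) : Prop :=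
  ∀ x : 𝕏, ν.map (fun y => dist x y) ≪ (volume : Measure ℝ)

/-- `B_R = sup_x ν(closedBall x R)`. -/
def ballVolSup [PseudoMetricSpace 𝕏] (ν : Measure 𝕏) (R : ℝ) : ℝ≥0∞ :=
  ⨆ x : 𝕏, ν (Metric.closedBall x R)

/-- The `k`-fold product measure `ν^k` on `𝕏^k`. -/
def piMeasure (ν : Measure 𝕏) [SigmaFinite ν] (k : ℕ) : Measure (Fin k → 𝕏) :=
  Measure.pi fun _ => ν

/-- `Λ^k ⊆ 𝕏^k`. -/
def tupleSet (Λ : Set 𝕏) (k : ℕ) : Set (Fin k → 𝕏) := Set.univ.pi fun _ => Λ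

/-- The grand-canonical partition function
`Z_{Λ,φ}(λ) = ∑_{k ≥ 0} (λ^k / k!) ∫_{Λ^k} e^{-H(x)} dν^k(x)`. -/
def partitionFunction (ν : Measure 𝕏) [SigmaFinite ν] (Λ : Set 𝕏) (φ : Potential 𝕏)
    (lam : ℂ) : ℂ :=
  ∑' k : ℕ, (lam ^ k / (Nat.factorial k : ℂ)) *
    ∫ x in tupleSet Λ k, (expNeg (hamiltonian φ x) : ℂ) ∂(piMeasure ν k)

/-- The modified `k`-point density `κ(x) = λ^k Z_{Λ,φ}(λ | x) / Z_{Λ,φ}(λ)`. -/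
def density (ν : Measure 𝕏) [SigmaFinite ν] (Λ : Set 𝕏) (φ : Potential 𝕏) (lam : ℂ)
    {k : ℕ} (x : Fin k → 𝕏) : ℂ :=
  lam ^ k * partitionFunction ν Λ (pin φ x) lam / partitionFunction ν Λ φ lam

/-- `Φ` is `δ`-zero-free on `Λ` at activity `lam`. -/
def ZeroFree (ν : Measure 𝕏) [SigmaFinite ν] (Λ : Set 𝕏) (lam : ℂ) (δ : ℝ)
    (Φ : Set (Potential 𝕏)) : Prop :=
  ∀ φ ∈ Φ, δ ≤ ‖partitionFunction ν Λ φ lam‖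

/-- `Φ` is closed under modification (with respect to the ordering based at `z`). -/
def ClosedUnderModification [PseudoMetricSpace 𝕏] (z : 𝕏) (Φ : Set (Potential 𝕏)) : Prop :=
  (∀ φ ∈ Φ, ∀ (y : 𝕏) (t : ℝ≥0∞), partialPin z φ y t ∈ Φ) ∧
  (∀ φ ∈ Φ, ∀ Δ : Set 𝕏, MeasurableSet Δ → restrictOne φ Δ ∈ Φ)

end Meas

/-- Telescoping sum along a finite sequence indexed by `Fin (n + 1)`. -/
lemma sum_fin_telescope {E : Type*} [AddCommGroup E] (n : ℕ) (F : Fin (n + 1) → E) :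
    ∑ i : Fin n, (F i.succ - F i.castSucc) = F (Fin.last n) - F 0 := by
  induction n with
  | zero => simp
  | succ m ih =>
    rw [Fin.sum_univ_castSucc]
    have h := ih (fun i => F i.castSucc)
    simp only [Fin.castSucc_zero] at h
    simp only [Fin.succ_castSucc, Fin.succ_last]
    rw [h]
    abel

/-- If `h` is continuous on `[a, b]` and `g` is integrable there, the sums obtained by freezing
`h` at the tags converge to `∫ h g`: uniform continuity bounds the error on each subinterval by
`η ∫ ‖g‖`. -/
lemma riemannStieltjes_aux {a b : ℝ} (hab : a < b) {γ g h : ℝ → ℂ}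
    (hg : IntervalIntegrable g volume a b)
    (hγ : ∀ s ∈ Set.Icc a b, γ s = γ a + ∫ u in a..s, g u)
    (hh : ContinuousOn h (Set.Icc a b)) {ε : ℝ} (hε : 0 < ε) :
    ∃ δ > (0 : ℝ), ∀ (n : ℕ) (t : Fin (n + 1) → ℝ) (tag : Fin n → ℝ),
      t 0 = a → t (Fin.last n) = b →
      (∀ i : Fin n, t i.castSucc < t i.succ) →
      (∀ i : Fin n, tag i ∈ Set.Icc (t i.castSucc) (t i.succ)) →
      (∀ i : Fin n, t i.succ - t i.castSucc < δ) →
      ‖(∑ i : Fin n, h (tag i) * (γ (t i.succ) - γ (t i.castSucc))) -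
          ∫ s in a..b, h s * g s‖ < ε := by
  have hM : 0 ≤ ∫ s in a..b, ‖g s‖ :=
    intervalIntegral.integral_nonneg hab.le fun _ _ => norm_nonneg _
  set M := ∫ s in a..b, ‖g s‖ with hMdef
  have huc := isCompact_Icc.uniformContinuousOn_of_continuous hh
  rw [Metric.uniformContinuousOn_iff] at huc
  obtain ⟨δ, hδ, hδh⟩ := huc (ε / (M + 1)) (by positivity)
  refine ⟨δ, hδ, fun n t tag h0 h1 hlt htag hmesh => ?_⟩
  have hmono : Monotone t := (Fin.strictMono_iff_lt_succ.2 hlt).monotone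
  have hmem : ∀ i, t i ∈ Set.Icc a b := fun i =>
    ⟨h0 ▸ hmono (Fin.zero_le i), h1 ▸ hmono (Fin.le_last i)⟩
  have hsub : ∀ {c d : ℝ}, c ∈ Set.Icc a b → d ∈ Set.Icc a b →
      Set.uIcc c d ⊆ Set.uIcc a b := fun hc hd => by
    rw [Set.uIcc_of_le hab.le]
    exact Set.ordConnected_Icc.uIcc_subset hc hd
  have hgi : ∀ {c d : ℝ}, c ∈ Set.Icc a b → d ∈ Set.Icc a b →
      IntervalIntegrable g volume c d := fun hc hd => hg.mono_set (hsub hc hd)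
  have hhg : IntervalIntegrable (fun s => h s * g s) volume a b :=
    hg.continuousOn_mul (by rwa [Set.uIcc_of_le hab.le])
  have hhgi : ∀ {c d : ℝ}, c ∈ Set.Icc a b → d ∈ Set.Icc a b →
      IntervalIntegrable (fun s => h s * g s) volume c d := fun hc hd => hhg.mono_set (hsub hc hd)
  have ha : a ∈ Set.Icc a b := Set.left_mem_Icc.2 hab.le
  -- Split the integrals of `h g` and of `‖g‖` over the partition.
  have hsplit : ∫ s in a..b, h s * g s =
      ∑ i : Fin n, ∫ s in (t i.castSucc)..(t i.succ), h s * g s := by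
    have key := sum_fin_telescope n (fun i => ∫ s in a..(t i), h s * g s)
    simp only [h0, h1, intervalIntegral.integral_same, sub_zero] at key
    rw [← key]
    exact Finset.sum_congr rfl fun i _ =>
      intervalIntegral.integral_interval_sub_left (hhgi ha (hmem _)) (hhgi ha (hmem _))
  have hsplitM : M = ∑ i : Fin n, ∫ s in (t i.castSucc)..(t i.succ), ‖g s‖ := by
    have key := sum_fin_telescope n (fun i => ∫ s in a..(t i), ‖g s‖)
    simp only [h0, h1, intervalIntegral.integral_same, sub_zero] at key
    rw [hMdef, ← key]
    exact Finset.sum_congr rfl fun i _ =>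
      intervalIntegral.integral_interval_sub_left (hgi ha (hmem _)).norm (hgi ha (hmem _)).norm
  have hincr : ∀ i : Fin n, γ (t i.succ) - γ (t i.castSucc) =
      ∫ s in (t i.castSucc)..(t i.succ), g s := fun i => by
    rw [hγ _ (hmem i.succ), hγ _ (hmem i.castSucc), add_sub_add_left_eq_sub]
    exact intervalIntegral.integral_interval_sub_left (hgi ha (hmem _)) (hgi ha (hmem _))
  have hpiece : ∀ i : Fin n, ‖h (tag i) * (γ (t i.succ) - γ (t i.castSucc)) -
      ∫ s in (t i.castSucc)..(t i.succ), h s * g s‖ ≤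
      ε / (M + 1) * ∫ s in (t i.castSucc)..(t i.succ), ‖g s‖ := fun i => by
    rw [hincr, ← intervalIntegral.integral_const_mul,
      ← intervalIntegral.integral_sub ((hgi (hmem _) (hmem _)).const_mul _)
        (hhgi (hmem _) (hmem _)), ← intervalIntegral.integral_const_mul]
    refine intervalIntegral.norm_integral_le_of_norm_le (hlt i).le
      (Filter.Eventually.of_forall fun s hs => ?_) ((hgi (hmem _) (hmem _)).norm.const_mul _)
    rw [← sub_mul, norm_mul]
    refine mul_le_mul_of_nonneg_right ?_ (norm_nonneg _)
    rw [← dist_eq_norm]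
    have hs' : s ∈ Set.Icc (t i.castSucc) (t i.succ) := Set.Ioc_subset_Icc_self hs
    have hI := Set.Icc_subset_Icc (hmem i.castSucc).1 (hmem i.succ).2
    exact (hδh _ (hI (htag i)) _ (hI hs')
      ((Real.dist_le_of_mem_Icc (htag i) hs').trans_lt (hmesh i))).le
  calc ‖(∑ i : Fin n, h (tag i) * (γ (t i.succ) - γ (t i.castSucc))) - ∫ s in a..b, h s * g s‖
      ≤ ∑ i : Fin n, ε / (M + 1) * ∫ s in (t i.castSucc)..(t i.succ), ‖g s‖ := by
        rw [hsplit, ← Finset.sum_sub_distrib]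
        exact norm_sum_le_of_le _ fun i _ => hpiece i
    _ = ε / (M + 1) * M := by rw [← Finset.mul_sum, ← hsplitM]
    _ < ε := by
        rw [div_mul_eq_mul_div, div_lt_iff₀ (by positivity)]
        nlinarith

/-- (Lemma `claim:path_intergal`.) For an absolutely continuous path
`γ : [a,b] → U` (with `γ(s) = γ(a) + ∫_a^s g(u) du`, `g` integrable) in an open connected
`U ⊆ ℂ` and a continuous `f : U → ℂ`, the Riemann–Stieltjes sums of `f` along `γ` converge
to the Lebesgue integral `∫_a^b f(γ(s)) γ'(s) ds` as the mesh of the tagged partition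
tends to `0`. -/
theorem statement16 (U : Set ℂ) (hUopen : IsOpen U) (hUconn : IsConnected U)
    (a b : ℝ) (hab : a < b) (γ g : ℝ → ℂ)
    (hg : IntervalIntegrable g volume a b)
    (hγ : ∀ s ∈ Set.Icc a b, γ s = γ a + ∫ u in a..s, g u)
    (hγU : Set.MapsTo γ (Set.Icc a b) U)
    (f : ℂ → ℂ) (hf : ContinuousOn f U) :
    ∀ ε > (0 : ℝ), ∃ δ > (0 : ℝ), ∀ (n : ℕ) (t : Fin (n + 1) → ℝ) (tag : Fin n → ℝ),
      t 0 = a → t (Fin.last n) = b →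
      (∀ i : Fin n, t i.castSucc < t i.succ) →
      (∀ i : Fin n, tag i ∈ Set.Icc (t i.castSucc) (t i.succ)) →
      (∀ i : Fin n, t i.succ - t i.castSucc < δ) →
      ‖(∑ i : Fin n, f (γ (tag i)) * (γ (t i.succ) - γ (t i.castSucc))) -
          ∫ s in a..b, f (γ s) * g s‖ < ε := by
  intro ε hε
  have hprim : ContinuousOn (fun s => ∫ u in a..s, g u) (Set.Icc a b) := by
    have := intervalIntegral.continuousOn_primitive_interval
      (μ := volume) (f := g) (a := a) (b := b)
      (by rw [Set.uIcc_of_le hab.le]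
          exact (intervalIntegrable_iff_integrableOn_Icc_of_le hab.le).1 hg)
    rwa [Set.uIcc_of_le hab.le] at this
  have hγc : ContinuousOn γ (Set.Icc a b) := (continuousOn_const.add hprim).congr hγ
  exact riemannStieltjes_aux hab hg hγ (hf.comp hγc hγU) hε

end GibbsPP
end
end

section
/- Let U ⊆ ℂ \ {0} be open and connected, let a < b, and let γ : [a,b] → U be a rectifiable path (continuous and of bounded variation). If I ∈ ℂ is the value of the line integral ∫_γ (1/z) dz, i.e., the Riemann–Stieltjes sums Σ_{j=1}^n (γ(t_j) − γ(t_{j−1}))/γ(t_j^*) converge to I as the mesh of the tagged partition a = t₀ < … < t_n = b tends to 0, then exp(I) = γ(b)/γ(a). -/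
/-!
For a partition `a = t₀ < … < t_N = b` tagged at left endpoints, the Riemann–Stieltjes summands
are `w_j = (γ(t_{j+1}) - γ(t_j)) / γ(t_j)`, so that `1 + w_j = γ(t_{j+1}) / γ(t_j)` and the product
of the `1 + w_j` telescopes to `γ(b) / γ(a)`. Hence `L = ∑ log (1 + w_j)` satisfies
`exp L = γ(b) / γ(a)` exactly. Since `|log (1 + w) - w| ≤ |w|²` for `|w| ≤ 1/2`, the difference
between `L` and the Riemann–Stieltjes sum is at most `max |w_j| * ∑ |w_j|`
(`exists_exp_eq_div_of_small_steps`). The maximum tends to `0` by uniform continuity of `γ`, and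
`∑ |w_j|` is bounded by the variation of `γ` divided by `min |γ| > 0`. So `I` is a limit of
solutions `L` of `exp L = γ(b) / γ(a)`, and the solution set is closed.
-/

open MeasureTheory
open scoped ENNReal NNReal BigOperators Classical

noncomputable section

namespace GibbsPP

variable {𝕏 : Type*}

/-- Discrete form of the claim: along a chain of nonzero points with relative steps of size at most
`η ≤ 1/2`, the sum of relative steps is within `η * ∑ ‖w i‖` of an exact logarithm of the quotient
of the endpoints. -/
theorem exists_exp_eq_div_of_small_steps (z : ℕ → ℂ) (η : ℝ) (hη : η ≤ 1 / 2) (N : ℕ)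
    (hz : ∀ i ≤ N, z i ≠ 0) (hw : ∀ i < N, ‖(z (i + 1) - z i) / z i‖ ≤ η) :
    ∃ L : ℂ, Complex.exp L = z N / z 0 ∧
      ‖L - ∑ i ∈ Finset.range N, (z (i + 1) - z i) / z i‖ ≤
        η * ∑ i ∈ Finset.range N, ‖(z (i + 1) - z i) / z i‖ := by
  induction N with
  | zero => exact ⟨0, by simp [hz 0 le_rfl], by simp⟩
  | succ N ih =>
    obtain ⟨L, hL, hLs⟩ := ih (fun i hi => hz i (by omega)) (fun i hi => hw i (by omega))
    have h0 := hz 0 (by omega)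
    have hN := hz N (by omega)
    have hN1 := hz (N + 1) le_rfl
    have hwN := hw N (by omega)
    rw [Finset.sum_range_succ, Finset.sum_range_succ]
    set w := (z (N + 1) - z N) / z N with hwdef
    have h1w : 1 + w = z (N + 1) / z N := by rw [hwdef]; field_simp; ring
    have hlog : ‖Complex.log (1 + w) - w‖ ≤ η * ‖w‖ := by
      have h := Complex.norm_log_one_add_sub_self_le (z := w) (by linarith)
      have hinv : (1 - ‖w‖)⁻¹ ≤ 2 := by
        rw [inv_le_comm₀ (by linarith) (by norm_num)]
        linarith
      calc _ ≤ ‖w‖ ^ 2 * (1 - ‖w‖)⁻¹ / 2 := h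
        _ ≤ ‖w‖ ^ 2 * 2 / 2 := by gcongr
        _ = ‖w‖ * ‖w‖ := by ring
        _ ≤ η * ‖w‖ := by gcongr
    refine ⟨L + Complex.log (1 + w), ?_, ?_⟩
    · rw [Complex.exp_add, hL, Complex.exp_log (by rw [h1w]; exact div_ne_zero hN1 hN), h1w]
      field_simp
    · rw [add_sub_add_comm, mul_add]
      exact norm_add_le_of_le hLs hlog

/-- (Lemma `claim:logFromLineintegral`.) Let `γ : [a,b] → U` be a rectifiable
path (continuous and of bounded variation) in an open connected `U ⊆ ℂ \ {0}`. If `I` is the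
value of the line integral `∫_γ dz/z`, i.e. the Riemann–Stieltjes sums
`∑_j (γ(t_j) - γ(t_{j-1}))/γ(t_j^*)` converge to `I` as the mesh tends to `0`, then
`exp(I) = γ(b)/γ(a)`. -/
theorem statement17 (U : Set ℂ) (hUopen : IsOpen U) (hUconn : IsConnected U)
    (hU0 : (0 : ℂ) ∉ U) (a b : ℝ) (hab : a < b) (γ : ℝ → ℂ)
    (hcont : ContinuousOn γ (Set.Icc a b))
    (hbv : BoundedVariationOn γ (Set.Icc a b))
    (hγU : Set.MapsTo γ (Set.Icc a b) U) (I : ℂ)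
    (hI : ∀ ε > (0 : ℝ), ∃ δ > (0 : ℝ), ∀ (n : ℕ) (t : Fin (n + 1) → ℝ) (tag : Fin n → ℝ),
      t 0 = a → t (Fin.last n) = b →
      (∀ i : Fin n, t i.castSucc < t i.succ) →
      (∀ i : Fin n, tag i ∈ Set.Icc (t i.castSucc) (t i.succ)) →
      (∀ i : Fin n, t i.succ - t i.castSucc < δ) →
      ‖(∑ i : Fin n, (γ (t i.succ) - γ (t i.castSucc)) / γ (tag i)) - I‖ < ε) :
    Complex.exp I = γ b / γ a := by
  have hne : ∀ x ∈ Set.Icc a b, γ x ≠ 0 := fun x hx h => hU0 (h ▸ hγU hx)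
  obtain ⟨m, hm, hmle⟩ : ∃ m > 0, ∀ x ∈ Set.Icc a b, m ≤ ‖γ x‖ := by
    obtain ⟨x₀, hx₀, hmin⟩ :=
      isCompact_Icc.exists_isMinOn (Set.nonempty_Icc.2 hab.le) hcont.norm
    exact ⟨‖γ x₀‖, norm_pos_iff.2 (hne x₀ hx₀), fun x hx => hmin hx⟩
  -- The logarithms of `γ b / γ a` form a closed set, so it suffices to approximate `I` by them.
  have hclosed : IsClosed {L : ℂ | Complex.exp L = γ b / γ a} :=
    isClosed_eq Complex.continuous_exp continuous_const
  suffices h : I ∈ closure {L : ℂ | Complex.exp L = γ b / γ a} by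
    rw [hclosed.closure_eq] at h
    exact h
  rw [Metric.mem_closure_iff]
  intro ε hε
  obtain ⟨δ₁, hδ₁, hsum⟩ := hI (ε / 2) (half_pos hε)
  set V : ℝ := (eVariationOn γ (Set.Icc a b)).toReal with hV
  have hV0 : 0 ≤ V := ENNReal.toReal_nonneg
  -- The bound on the relative steps is chosen so that `η * (V / m) ≤ ε / 2`.
  set η : ℝ := min (1 / 2) (ε * m / (2 * (V + 1))) with hη
  have hη0 : 0 < η := by rw [hη]; positivity
  have hηV : η * (V / m) ≤ ε / 2 := by
    calc η * (V / m) ≤ ε * m / (2 * (V + 1)) * (V / m) := by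
          gcongr
          exact min_le_right _ _
      _ = ε / 2 * (V / (V + 1)) := by field_simp
      _ ≤ ε / 2 * 1 := by
          gcongr
          rw [div_le_one (by positivity)]
          linarith
      _ = ε / 2 := mul_one _
  obtain ⟨δ₂, hδ₂, huc⟩ := Metric.uniformContinuousOn_iff.1
    (isCompact_Icc.uniformContinuousOn_of_continuous hcont) (η * m) (by positivity)
  have hba : 0 < b - a := sub_pos.2 hab
  obtain ⟨N, hN0, hN⟩ : ∃ N : ℕ, 0 < N ∧ (b - a) / N < min δ₁ δ₂ := by
    obtain ⟨N, hN⟩ := exists_nat_gt ((b - a) / min δ₁ δ₂)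
    have hδ : 0 < min δ₁ δ₂ := lt_min hδ₁ hδ₂
    have hNpos : (0 : ℝ) < N := lt_trans (by positivity) hN
    refine ⟨N, by exact_mod_cast hNpos, ?_⟩
    rw [div_lt_iff₀ hδ] at hN
    rw [div_lt_iff₀ hNpos]
    linarith
  have hNpos : (0 : ℝ) < N := by exact_mod_cast hN0
  set t : ℕ → ℝ := fun i => a + i * ((b - a) / N) with ht
  have hh : 0 < (b - a) / N := by positivity
  have ht0 : t 0 = a := by simp [ht]
  have htN : t N = b := by simp only [ht]; field_simp; ring
  have hstep : ∀ i, t (i + 1) - t i = (b - a) / N := fun i => by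
    simp only [ht]; push_cast; ring
  have htmono : Monotone t := monotone_nat_of_le_succ fun i => by linarith [hstep i]
  have htmem : ∀ i ≤ N, t i ∈ Set.Icc a b := fun i hi =>
    ⟨ht0 ▸ htmono (Nat.zero_le i), htN ▸ htmono hi⟩
  have hw : ∀ i < N, ‖(γ (t (i + 1)) - γ (t i)) / γ (t i)‖ ≤ η := by
    intro i hi
    have hd := huc (t (i + 1)) (htmem _ hi) (t i) (htmem _ hi.le) (by
      rw [Real.dist_eq, hstep, abs_of_pos hh]
      exact hN.trans_le (min_le_right _ _))
    rw [dist_eq_norm] at hd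
    rw [norm_div, div_le_iff₀ (norm_pos_iff.2 (hne _ (htmem _ hi.le)))]
    exact hd.le.trans (by gcongr; exact hmle _ (htmem _ hi.le))
  obtain ⟨L, hL, hLs⟩ := exists_exp_eq_div_of_small_steps (fun i => γ (t i)) η (min_le_left _ _) N
    (fun i hi => hne _ (htmem i hi)) hw
  simp only [ht0, htN] at hL
  have hvar : ∑ i ∈ Finset.range N, ‖γ (t (i + 1)) - γ (t i)‖ ≤ V := by
    have h := eVariationOn.sum_le_of_monotoneOn_Iic (f := γ) (s := Set.Icc a b) (n := N) (u := t)
      (htmono.monotoneOn _) htmem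
    have h' := ENNReal.toReal_mono hbv h
    rw [ENNReal.toReal_sum (fun i _ => edist_ne_top _ _)] at h'
    simpa only [← dist_edist, dist_eq_norm] using h'
  have hwsum : ∑ i ∈ Finset.range N, ‖(γ (t (i + 1)) - γ (t i)) / γ (t i)‖ ≤ V / m := by
    calc _ ≤ ∑ i ∈ Finset.range N, ‖γ (t (i + 1)) - γ (t i)‖ / m := by
          refine Finset.sum_le_sum fun i hi => ?_
          rw [norm_div]
          gcongr
          exact hmle _ (htmem _ (Finset.mem_range.1 hi).le)
      _ = (∑ i ∈ Finset.range N, ‖γ (t (i + 1)) - γ (t i)‖) / m := by rw [Finset.sum_div]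
      _ ≤ V / m := by gcongr
  have hS := hsum N (fun i => t i) (fun i => t i) (by simpa using ht0) (by simpa using htN)
    (fun i => by
      simp only [Fin.val_castSucc, Fin.val_succ]
      linarith [hstep i])
    (fun i => by
      simp only [Fin.val_castSucc, Fin.val_succ]
      exact ⟨le_rfl, htmono (Nat.le_succ _)⟩)
    (fun i => by
      simp only [Fin.val_castSucc, Fin.val_succ]
      rw [hstep]
      exact hN.trans_le (min_le_left _ _))
  simp only [Fin.val_castSucc, Fin.val_succ] at hS
  rw [Fin.sum_univ_eq_sum_range (fun i => (γ (t (i + 1)) - γ (t i)) / γ (t i)) N] at hS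
  refine ⟨L, hL, ?_⟩
  have hLs' := hLs.trans ((mul_le_mul_of_nonneg_left hwsum hη0.le).trans hηV)
  rw [dist_comm, dist_eq_norm,
    ← sub_add_sub_cancel L (∑ i ∈ Finset.range N, (γ (t (i + 1)) - γ (t i)) / γ (t i)) I]
  exact (norm_add_le _ _).trans_lt ((add_lt_add_of_le_of_lt hLs' hS).trans_eq (add_halves ε))

end GibbsPP
end
end

section
/- Fix R > 0 and k ≥ 2. There exist a sequence of complete separable metric spaces (𝕏_n, d_n) with locally finite Borel measures ν_n satisfying Assumption (A), pure k-body symmetric repulsive potentials φ^{(n)} of range at most R, bounded measurable regions Λ_n ⊆ 𝕏_n, positive reals λ_n, and a constant c > 0 such that: (1) B_R^{(n)} := sup_{x ∈ 𝕏_n} ν_n({y : d_n(x,y) ≤ R}) → ∞ as n → ∞; (2) λ_n ≤ c · log(B_R^{(n)}) / B_R^{(n)} for all sufficiently large n; and (3) Z_{Λ_n, φ^{(n)}}(−λ_n) = 0 for every n. In particular, the zero-free disk of radius of order 1/B_R is essentially optimal for repulsive finite-range multi-body potentials. -/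
/-!
The partition function depends only on the product of activity and measure, so a single example
on `ℝ` with a zero at `-t`, `t > 0`, suffices: replacing Lebesgue measure by `(n + 1)` times it
gives `B_R = 2R(n + 1)` and `λ_n = t / (n + 1)`, so `λ_n B_R` is constant while `log B_R → ∞`.

The example lives in `Λ = [0, R]`. For even `k` every `k`-tuple of points of `Λ` is forbidden, and
the partition function is the exponential series of `λR` truncated at the odd degree `k - 1`. For
odd `k` the truncated exponential has even degree and no real zero, so the `k`-tuples with exactly
one point in `[0, R/2)` are allowed. Among `k + 1` points the `k`-subsets cannot all be of this kind
(`exists_not_oneBelow`), hence the partition function is a polynomial of odd degree `k`. In both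
cases its constant and leading coefficients are positive (`confInt_topDeg_pos`), so it has a
negative root (`exists_neg_root`).
-/

/-- A bundled setup: a complete separable metric space with its Borel σ-algebra and a
(σ-finite) locally finite Borel measure. -/
structure Setup where
  X : Type
  [met : MetricSpace X]
  [meas : MeasurableSpace X]
  [borel : BorelSpace X]
  ν : MeasureTheory.Measure X
  [sf : MeasureTheory.SigmaFinite ν]

attribute [instance] Setup.met Setup.meas Setup.borel Setup.sf

open MeasureTheory
open scoped ENNReal NNReal BigOperators Classical

noncomputable section

namespace GibbsPP

variable {𝕏 : Type*}

/-! ### The potential -/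

/-- Exactly one coordinate of `x` lies in the half-line `(-∞, h)`. -/
def OneBelow (h : ℝ) {m : ℕ} (x : Fin m → ℝ) : Prop :=
  ∃ i, x i < h ∧ ∀ j, x j < h → j = i

/-- The hard-core pure `k`-body potential on `ℝ`: a `k`-tuple in `[0, R]` is forbidden, except
that for odd `k` it is allowed when exactly one of its points lies in `[0, R/2)`. -/
def hardCore (R : ℝ) (k : ℕ) : Potential ℝ := fun m x =>
  if m = k ∧ (∀ i, x i ∈ Set.Icc 0 R) ∧ ¬ (Odd k ∧ OneBelow (R / 2) x) then ⊤ else 0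

/-- The largest number of points that `[0, R]` can hold with finite energy under `hardCore R k`
(for `k ≥ 2`). It is the degree of the partition function in the activity. -/
def topDeg (k : ℕ) : ℕ := if Odd k then k else k - 1

/-- The configuration integral of `j` points in `[0, R]`, with respect to Lebesgue measure. -/
def confInt (R : ℝ) (k j : ℕ) : ℝ :=
  ∫ x in tupleSet (Set.Icc 0 R) j, expNeg (hamiltonian (hardCore R k) x) ∂(piMeasure volume j)

lemma hardCore_nonneg (R : ℝ) (k : ℕ) : Repulsive (hardCore R k) := by
  intro m x
  unfold hardCore
  split_ifs <;> simp

lemma measurableSet_oneBelow (h : ℝ) (m : ℕ) :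
    MeasurableSet {x : Fin m → ℝ | OneBelow h x} := by
  unfold OneBelow
  have hlt (j : Fin m) : MeasurableSet {x : Fin m → ℝ | x j < h} :=
    measurableSet_lt (measurable_pi_apply j) measurable_const
  have hE : {x : Fin m → ℝ | ∃ i, x i < h ∧ ∀ j, x j < h → j = i} =
      ⋃ i, ({x | x i < h} ∩ ⋂ j, ({x | x j < h}ᶜ ∪ {_x | j = i})) := by
    ext x
    simp [imp_iff_not_or]
  rw [hE]
  exact MeasurableSet.iUnion fun i => (hlt i).inter <|
    MeasurableSet.iInter fun j => (hlt j).compl.union (MeasurableSet.const _)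

lemma isPotential_hardCore (R : ℝ) (k : ℕ) : IsPotential (hardCore R k) := by
  refine ⟨fun m x => ?_, fun m => ?_⟩
  · unfold hardCore
    split_ifs <;> simp
  · unfold hardCore
    refine Measurable.ite ?_ measurable_const measurable_const
    have h1 : MeasurableSet {x : Fin m → ℝ | ∀ i, x i ∈ Set.Icc 0 R} := by
      rw [Set.ofPred_forall]
      exact MeasurableSet.iInter fun i => measurable_pi_apply i measurableSet_Icc
    exact (MeasurableSet.const _).inter
      (h1.inter ((MeasurableSet.const _).inter (measurableSet_oneBelow _ m)).compl)

lemma oneBelow_comp (h : ℝ) {m : ℕ} (π : Equiv.Perm (Fin m)) (x : Fin m → ℝ) :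
    OneBelow h (x ∘ π) ↔ OneBelow h x := by
  constructor
  · rintro ⟨i, hi, hu⟩
    refine ⟨π i, hi, fun j hj => ?_⟩
    rw [← hu (π.symm j) (by simpa using hj)]
    simp
  · rintro ⟨i, hi, hu⟩
    refine ⟨π.symm i, by simpa using hi, fun j hj => ?_⟩
    rw [← hu (π j) hj]
    simp

lemma isSymmetric_hardCore (R : ℝ) (k : ℕ) : IsSymmetric (hardCore R k) := by
  intro m π x
  unfold hardCore
  rw [oneBelow_comp]
  have : (∀ i, (x ∘ π) i ∈ Set.Icc 0 R) ↔ ∀ i, x i ∈ Set.Icc 0 R :=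
    ⟨fun h i => by simpa using h (π.symm i), fun h i => h (π i)⟩
  simp only [this]

lemma hasRange_hardCore (R : ℝ) (k : ℕ) : HasRange (hardCore R k) R := by
  rintro m x ⟨i, j, hij⟩
  unfold hardCore
  rw [if_neg]
  rintro ⟨-, hx, -⟩
  have := Real.dist_le_of_mem_Icc (hx i) (hx j)
  linarith

lemma hardCore_of_ne (R : ℝ) (k m : ℕ) (hm : m ≠ k) (x : Fin m → ℝ) : hardCore R k m x = 0 := by
  simp [hardCore, hm]

/-! ### The Hamiltonian on `[0, R]` -/

lemma subtuple_mem {m : ℕ} {x : Fin m → ℝ} {s : Set ℝ} (hx : ∀ i, x i ∈ s)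
    (S : Finset (Fin m)) (i : Fin S.card) : subtuple x S i ∈ s := hx _

lemma oneBelow_subtuple (h : ℝ) {m : ℕ} (x : Fin m → ℝ) (S : Finset (Fin m)) :
    OneBelow h (subtuple x S) ↔ ∃ i ∈ S, x i < h ∧ ∀ j ∈ S, x j < h → j = i := by
  constructor
  · rintro ⟨i, hi, hu⟩
    refine ⟨_, (S.orderIsoOfFin rfl i).2, hi, fun j hj hlt => ?_⟩
    have := hu ((S.orderIsoOfFin rfl).symm ⟨j, hj⟩) (by simpa [subtuple] using hlt)
    rw [← this]
    simp
  · rintro ⟨i, hi, hlt, hu⟩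
    refine ⟨(S.orderIsoOfFin rfl).symm ⟨i, hi⟩, by simpa [subtuple] using hlt, fun j hj => ?_⟩
    have := hu _ (S.orderIsoOfFin rfl j).2 hj
    rw [OrderIso.eq_symm_apply]
    exact Subtype.ext this

lemma hamiltonian_eq_top {φ : Potential ℝ} (hφ : Repulsive φ) {m : ℕ} (x : Fin m → ℝ)
    (S : Finset (Fin m)) (hS : S.Nonempty) (h : φ S.card (subtuple x S) = ⊤) :
    hamiltonian φ x = ⊤ := by
  unfold hamiltonian
  rw [← Finset.add_sum_erase _ _ (a := S) (by simp [hS.ne_empty]), h]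
  refine EReal.top_add_of_ne_bot ?_
  have : (0 : EReal) ≤ ∑ T ∈ ((Finset.univ.powerset.erase (∅ : Finset (Fin m))).erase S),
      φ T.card (subtuple x T) := Finset.sum_nonneg fun T _ => hφ _ _
  intro hb
  rw [hb] at this
  simp at this

lemma expNeg_of_lt {R : ℝ} {k j : ℕ} (hj : j < k) (x : Fin j → ℝ) :
    expNeg (hamiltonian (hardCore R k) x) = 1 := by
  have : hamiltonian (hardCore R k) x = 0 := by
    refine Finset.sum_eq_zero fun S _ => hardCore_of_ne _ _ _ ?_ _
    have := card_finset_fin_le S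
    omega
  simp [this, expNeg]

lemma expNeg_eq_zero {R : ℝ} {k j : ℕ} (hk : 2 ≤ k) (x : Fin j → ℝ)
    (hx : ∀ i, x i ∈ Set.Icc 0 R) (S : Finset (Fin j)) (hS : S.card = k)
    (hn : ¬ (Odd k ∧ OneBelow (R / 2) (subtuple x S))) :
    expNeg (hamiltonian (hardCore R k) x) = 0 := by
  have : hamiltonian (hardCore R k) x = ⊤ := by
    refine hamiltonian_eq_top (hardCore_nonneg R k) x S (Finset.card_pos.1 (by omega)) ?_
    unfold hardCore
    rw [if_pos]
    exact ⟨hS, fun i => subtuple_mem hx S i, hn⟩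
  simp [this, expNeg]

/-- Among more than `k ≥ 2` points some `k` of them do not have exactly one member below `h`:
exchanging a point outside a `k`-subset against its only low member, and then against
another member, produces a `k`-subset with two low members. -/
lemma exists_not_oneBelow {k j : ℕ} (hk : 2 ≤ k) (hj : k < j) (h : ℝ) (x : Fin j → ℝ) :
    ∃ S : Finset (Fin j), S.card = k ∧ ¬ OneBelow h (subtuple x S) := by
  by_contra! hcon
  obtain ⟨S, -, hS⟩ := Finset.exists_subset_card_eq
    (s := (Finset.univ : Finset (Fin j))) (n := k) (by simpa using hj.le)
  obtain ⟨i, hiS, hi, hu⟩ := (oneBelow_subtuple h x S).1 (hcon S hS)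
  obtain ⟨b, hb⟩ : ∃ b, b ∉ S := by
    by_contra! hall
    have := Finset.card_le_card (fun a _ => hall a : Finset.univ ⊆ S)
    simp at this
    omega
  have hcard (a : Fin j) (ha : a ∈ S) : (insert b (S.erase a)).card = k := by
    rw [Finset.card_insert_of_notMem (by simp [hb]), Finset.card_erase_of_mem ha]
    omega
  have hbl : x b < h := by
    obtain ⟨a, haS, ha, -⟩ := (oneBelow_subtuple h x _).1 (hcon _ (hcard i hiS))
    rcases Finset.mem_insert.1 haS with rfl | haS
    · exact ha
    · rw [Finset.mem_erase] at haS
      exact absurd (hu a haS.2 ha) haS.1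
  obtain ⟨c, hcS, hci⟩ := Finset.exists_mem_ne (by omega : 1 < S.card) i
  obtain ⟨a, -, -, ha⟩ := (oneBelow_subtuple h x _).1 (hcon _ (hcard c hcS))
  have h1 := ha b (by simp) hbl
  have h2 := ha i (by simp [hci.symm, hiS]) hi
  exact hb (by rw [h1, ← h2]; exact hiS)

lemma expNeg_self {R : ℝ} {k : ℕ} (hk : 2 ≤ k) (hodd : Odd k) (x : Fin k → ℝ)
    (hx : ∀ i, x i ∈ Set.Icc 0 R) :
    expNeg (hamiltonian (hardCore R k) x) =
      {x : Fin k → ℝ | OneBelow (R / 2) x}.indicator (fun _ => (1 : ℝ)) x := by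
  have huniv : OneBelow (R / 2) (subtuple x Finset.univ) ↔ OneBelow (R / 2) x := by
    rw [oneBelow_subtuple]
    simp [OneBelow]
  by_cases h : OneBelow (R / 2) x
  · have : hamiltonian (hardCore R k) x = 0 := by
      refine Finset.sum_eq_zero fun S _ => ?_
      by_cases hS : S.card = k
      · have : S = Finset.univ := by
          rw [← Finset.card_eq_iff_eq_univ]; simpa using hS
        subst this
        unfold hardCore
        rw [if_neg]
        rintro ⟨-, -, hn⟩
        exact hn ⟨hodd, huniv.2 h⟩
      · exact hardCore_of_ne _ _ _ hS _
    rw [this, Set.indicator_of_mem (by exact h)]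
    simp [expNeg]
  · rw [Set.indicator_of_notMem (by exact h)]
    exact expNeg_eq_zero hk x hx Finset.univ (by simp) (fun hh => h (huniv.1 hh.2))

/-! ### The configuration integrals -/

lemma measurableSet_tupleSet (R : ℝ) (j : ℕ) : MeasurableSet (tupleSet (Set.Icc 0 R) j) :=
  MeasurableSet.univ_pi fun _ => measurableSet_Icc

lemma piMeasure_tupleSet (R : ℝ) (j : ℕ) :
    piMeasure volume j (tupleSet (Set.Icc 0 R) j) = ENNReal.ofReal R ^ j := by
  rw [piMeasure, tupleSet, Measure.pi_pi]
  simp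

lemma confInt_of_lt {R : ℝ} (hR : 0 < R) {k j : ℕ} (hj : j < k) : confInt R k j = R ^ j := by
  simp [confInt, expNeg_of_lt hj, measureReal_def, piMeasure_tupleSet, hR.le]

lemma confInt_of_topDeg_lt {R : ℝ} {k j : ℕ} (hk : 2 ≤ k) (hj : topDeg k < j) :
    confInt R k j = 0 := by
  unfold confInt
  refine setIntegral_eq_zero_of_forall_eq_zero fun x hx => ?_
  have hx' : ∀ i, x i ∈ Set.Icc 0 R := fun i => hx i (Set.mem_univ i)
  unfold topDeg at hj
  split_ifs at hj with hodd
  · obtain ⟨S, hS, hn⟩ := exists_not_oneBelow hk hj (R / 2) x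
    exact expNeg_eq_zero hk x hx' S hS (fun h => hn h.2)
  · obtain ⟨S, -, hS⟩ := Finset.exists_subset_card_eq
      (s := (Finset.univ : Finset (Fin j))) (n := k) (by simp; omega)
    exact expNeg_eq_zero hk x hx' S hS (fun h => hodd h.1)

lemma confInt_topDeg_pos {R : ℝ} (hR : 0 < R) {k : ℕ} (hk : 2 ≤ k) :
    0 < confInt R k (topDeg k) := by
  unfold topDeg
  split_ifs with hodd
  · unfold confInt
    rw [setIntegral_congr_fun (measurableSet_tupleSet R k)
      (fun x hx => expNeg_self hk hodd x fun i => hx i (Set.mem_univ i)),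
      integral_indicator (measurableSet_oneBelow _ _)]
    simp only [integral_const, smul_eq_mul, mul_one, measureReal_restrict_apply MeasurableSet.univ,
      Set.univ_inter]
    rw [measureReal_def, Measure.restrict_apply (measurableSet_oneBelow _ _)]
    refine ENNReal.toReal_pos ?_ ?_
    · -- The allowed configurations contain a box: first point low, all others high.
      let i₀ : Fin k := ⟨0, by omega⟩
      let box : Fin k → Set ℝ := fun i =>
        if i = i₀ then Set.Ico 0 (R / 2) else Set.Icc (R / 2) R
      have hsub : Set.univ.pi box ⊆
          {x : Fin k → ℝ | OneBelow (R / 2) x} ∩ tupleSet (Set.Icc 0 R) k := by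
        intro x hx
        have hlow : x i₀ ∈ Set.Ico 0 (R / 2) := by simpa [box] using hx i₀ (Set.mem_univ _)
        have hhigh : ∀ i, i ≠ i₀ → x i ∈ Set.Icc (R / 2) R := fun i hi => by
          simpa [box, hi] using hx i (Set.mem_univ _)
        refine ⟨⟨i₀, hlow.2, fun i hi => ?_⟩, fun i _ => ?_⟩
        · by_contra hne
          exact absurd (hhigh i hne).1 (not_le.2 hi)
        · by_cases hi : i = i₀
          · subst hi
            exact ⟨hlow.1, by linarith [hlow.2]⟩
          · exact ⟨by linarith [(hhigh i hi).1], (hhigh i hi).2⟩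
      have hpos : piMeasure volume k (Set.univ.pi box) ≠ 0 := by
        rw [piMeasure, Measure.pi_pi, Finset.prod_ne_zero_iff]
        intro i _
        by_cases hi : i = i₀
        · simp [box, hi, hR]
        · simp [box, hi, hR]
      exact fun h0 => hpos (measure_mono_null hsub h0)
    · refine ne_top_of_le_ne_top ?_ (measure_mono Set.inter_subset_right)
      rw [piMeasure_tupleSet]
      finiteness
  · rw [confInt_of_lt hR (by omega)]
    positivity

/-! ### The partition function and its zero -/

lemma odd_topDeg {k : ℕ} (hk : 2 ≤ k) : Odd (topDeg k) := by
  unfold topDeg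
  split_ifs with h
  · exact h
  · grind

lemma piMeasure_smul (s : ℝ≥0) (j : ℕ) :
    piMeasure (s • (volume : Measure ℝ)) j = s ^ j • piMeasure volume j := by
  unfold piMeasure
  refine (Measure.pi_eq fun t _ => ?_)
  rw [Measure.smul_apply, Measure.pi_pi]
  simp only [Measure.smul_apply, ENNReal.smul_def, smul_eq_mul, Finset.prod_mul_distrib,
    Finset.prod_const, Finset.card_univ, Fintype.card_fin, ENNReal.coe_pow]

lemma partitionFunction_eq {R : ℝ} {k : ℕ} (hk : 2 ≤ k) (s : ℝ≥0) (z : ℝ) :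
    partitionFunction (s • (volume : Measure ℝ)) (Set.Icc 0 R) (hardCore R k) (z : ℂ) =
      ((∑ j ∈ Finset.range (topDeg k + 1),
        confInt R k j / j.factorial * (s * z) ^ j : ℝ) : ℂ) := by
  have hterm (j : ℕ) : ((z : ℂ) ^ j / (Nat.factorial j : ℂ)) *
      ∫ x in tupleSet (Set.Icc 0 R) j, (expNeg (hamiltonian (hardCore R k) x) : ℂ)
        ∂(piMeasure (s • (volume : Measure ℝ)) j) =
      ((confInt R k j / j.factorial * (s * z) ^ j : ℝ) : ℂ) := by
    rw [integral_complex_ofReal, piMeasure_smul, Measure.restrict_smul, integral_smul_nnreal_measure]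
    simp only [confInt, NNReal.smul_def, smul_eq_mul]
    push_cast
    ring
  unfold partitionFunction
  simp_rw [hterm]
  rw [tsum_eq_sum (s := Finset.range (topDeg k + 1)), Complex.ofReal_sum]
  intro j hj
  rw [confInt_of_topDeg_lt hk (by simpa using hj)]
  simp

/-- A real polynomial of odd degree with positive constant and leading coefficients has a
negative root. -/
lemma exists_neg_root (c : ℕ → ℝ) {d : ℕ} (hd : Odd d) (h0 : 0 < c 0) (hc : 0 < c d) :
    ∃ t > 0, ∑ j ∈ Finset.range (d + 1), c j * (-t) ^ j = 0 := by
  have hlim : Filter.Tendsto (fun t : ℝ => ∑ j ∈ Finset.range (d + 1), c j * (-t) ^ j)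
      Filter.atTop Filter.atBot := by
    let P : Polynomial ℝ :=
      ∑ j ∈ Finset.range (d + 1), Polynomial.C (c j * (-1) ^ j) * Polynomial.X ^ j
    have hcoeff : P.coeff d = -c d := by
      simp only [P, Polynomial.finsetSum_coeff, Polynomial.coeff_C_mul, Polynomial.coeff_X_pow]
      simp [hd.neg_one_pow]
    have hdeg : P.natDegree = d := by
      refine le_antisymm ?_ (Polynomial.le_natDegree_of_ne_zero (by rw [hcoeff]; linarith))
      refine Polynomial.natDegree_sum_le_of_forall_le _ _ fun j hj => ?_
      exact (Polynomial.natDegree_C_mul_X_pow_le _ _).trans (by simp at hj; omega)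
    have hlead : P.leadingCoeff ≤ 0 := by
      rw [Polynomial.leadingCoeff, hdeg, hcoeff]
      linarith
    refine (P.tendsto_atBot_of_leadingCoeff_nonpos
      (Polynomial.natDegree_pos_iff_degree_pos.1 (hdeg ▸ hd.pos)) hlead).congr fun t => ?_
    simp only [P, Polynomial.eval_finsetSum, Polynomial.eval_mul, Polynomial.eval_C,
      Polynomial.eval_pow, Polynomial.eval_X]
    refine Finset.sum_congr rfl fun j _ => ?_
    rw [neg_pow t]
    ring
  have hcont : Continuous (fun t : ℝ => ∑ j ∈ Finset.range (d + 1), c j * (-t) ^ j) := by fun_prop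
  have hz : ∑ j ∈ Finset.range (d + 1), c j * (-(0 : ℝ)) ^ j = c 0 := by
    rw [Finset.sum_eq_single 0] <;> simp +contextual
  obtain ⟨T, hT, hT0⟩ := ((hlim.eventually_le_atBot 0).and (Filter.eventually_ge_atTop 0)).exists
  obtain ⟨t, ht, hroot⟩ := intermediate_value_Icc' hT0 hcont.continuousOn
    ⟨hT, by rw [hz]; exact h0.le⟩
  refine ⟨t, lt_of_le_of_ne ht.1 ?_, hroot⟩
  rintro rfl
  simp only [hz] at hroot
  exact h0.ne' hroot

lemma assumptionA_smul (s : ℝ≥0) : AssumptionA (s • (volume : Measure ℝ)) := by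
  intro x
  refine Measure.AbsolutelyContinuous.mk fun N hmeas hN => ?_
  rw [Measure.map_apply (by fun_prop) hmeas, Measure.smul_apply]
  have hsub : (fun y => dist x y) ⁻¹' N ⊆ (fun y => x - y) ⁻¹' N ∪ (fun y => y - x) ⁻¹' N := by
    intro y hy
    simp only [Set.mem_preimage, Real.dist_eq] at hy
    rcases abs_choice (x - y) with h | h <;> rw [h] at hy
    · exact Or.inl hy
    · exact Or.inr (by simpa using hy)
  have h1 : volume ((fun y => x - y) ⁻¹' N) = 0 := by
    rw [(Measure.measurePreserving_sub_left volume x).measure_preimage hmeas.nullMeasurableSet, hN]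
  have h2 : volume ((fun y => y - x) ⁻¹' N) = 0 := by
    rw [(measurePreserving_sub_right volume x).measure_preimage hmeas.nullMeasurableSet, hN]
  rw [measure_mono_null hsub (measure_union_null h1 h2), smul_zero]

lemma ballVolSup_smul (s : ℝ≥0) (R : ℝ) :
    ballVolSup (s • (volume : Measure ℝ)) R = s * ENNReal.ofReal (2 * R) := by
  unfold ballVolSup
  simp only [Measure.smul_apply, Real.volume_closedBall, ENNReal.smul_def, smul_eq_mul,
    ciSup_const]

/-- (Proposition `prop:upperBound`.) Fix `R > 0` and `k ≥ 2`. There are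
complete separable metric measure spaces `(𝕏_n, d_n, ν_n)` satisfying Assumption (A), pure
`k`-body symmetric repulsive potentials `φ⁽ⁿ⁾` of range at most `R`, bounded measurable
regions `Λ_n`, activities `λ_n > 0` and a constant `c > 0` such that `B_R⁽ⁿ⁾ → ∞`,
`λ_n ≤ c log(B_R⁽ⁿ⁾)/B_R⁽ⁿ⁾` for all large `n`, and `Z_{Λ_n, φ⁽ⁿ⁾}(-λ_n) = 0` for all `n`. -/
theorem statement19 (R : ℝ) (hR : 0 < R) (k : ℕ) (hk : 2 ≤ k) :
    ∃ (S : ℕ → Setup) (φ : ∀ n, Potential (S n).X) (Λ : ∀ n, Set (S n).X)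
      (lam : ℕ → ℝ) (c : ℝ),
      0 < c ∧
      (∀ n : ℕ, CompleteSpace (S n).X ∧ TopologicalSpace.SeparableSpace (S n).X ∧
        IsLocallyFiniteMeasure (S n).ν ∧ AssumptionA (S n).ν ∧
        IsPotential (φ n) ∧ IsSymmetric (φ n) ∧ Repulsive (φ n) ∧ HasRange (φ n) R ∧
        (∀ m : ℕ, m ≠ k → ∀ x : Fin m → (S n).X, φ n m x = 0) ∧
        Bornology.IsBounded (Λ n) ∧ MeasurableSet (Λ n) ∧
        ballVolSup (S n).ν R ≠ ⊤ ∧ 0 < lam n) ∧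
      Filter.Tendsto (fun n => (ballVolSup (S n).ν R).toReal) Filter.atTop Filter.atTop ∧
      (∀ᶠ n in Filter.atTop,
        lam n ≤ c * Real.log ((ballVolSup (S n).ν R).toReal) /
          (ballVolSup (S n).ν R).toReal) ∧
      (∀ n : ℕ, partitionFunction (S n).ν (Λ n) (φ n) (-(lam n : ℂ)) = 0) := by
  obtain ⟨t, ht, hroot⟩ := exists_neg_root (fun j => confInt R k j / j.factorial)
    (odd_topDeg hk) (by simp [confInt_of_lt hR (show 0 < k by omega)])
    (div_pos (confInt_topDeg_pos hR hk) (by positivity))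
  have hB (n : ℕ) : (ballVolSup (((n : ℝ≥0) + 1) • (volume : Measure ℝ)) R).toReal =
      ((n : ℝ) + 1) * (2 * R) := by
    rw [ballVolSup_smul, ENNReal.toReal_mul, ENNReal.toReal_ofReal (by positivity),
      ENNReal.coe_toReal]
    push_cast
    rfl
  have hlim : Filter.Tendsto (fun n : ℕ => ((n : ℝ) + 1) * (2 * R)) Filter.atTop Filter.atTop :=
    (Filter.tendsto_atTop_add_const_right _ _ tendsto_natCast_atTop_atTop).atTop_mul_const
      (by positivity)
  refine ⟨fun n => { X := ℝ, ν := ((n : ℝ≥0) + 1) • volume }, fun n => hardCore R k,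
    fun n => Set.Icc 0 R, fun n => t / (n + 1), 1, one_pos, fun n => ⟨?_, ?_, ?_, ?_, ?_, ?_, ?_,
      ?_, ?_, ?_, ?_, ?_, ?_⟩, ?_, ?_, fun n => ?_⟩
  · exact inferInstanceAs (CompleteSpace ℝ)
  · exact inferInstanceAs (TopologicalSpace.SeparableSpace ℝ)
  · exact inferInstanceAs (IsLocallyFiniteMeasure (((n : ℝ≥0) + 1) • (volume : Measure ℝ)))
  · exact assumptionA_smul _
  · exact isPotential_hardCore R k
  · exact isSymmetric_hardCore R k
  · exact hardCore_nonneg R k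
  · exact hasRange_hardCore R k
  · exact fun m hm x => hardCore_of_ne R k m hm x
  · exact Metric.isBounded_Icc (0 : ℝ) R
  · exact measurableSet_Icc (α := ℝ)
  · change ballVolSup (((n : ℝ≥0) + 1) • (volume : Measure ℝ)) R ≠ ⊤
    rw [ballVolSup_smul]
    finiteness
  · positivity
  · exact hlim.congr fun n => (hB n).symm
  · filter_upwards [(Real.tendsto_log_atTop.comp hlim).eventually_ge_atTop (t * (2 * R))]
      with n hn
    change t / (n + 1) ≤ 1 * Real.log
      (ballVolSup (((n : ℝ≥0) + 1) • (volume : Measure ℝ)) R).toReal /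
      (ballVolSup (((n : ℝ≥0) + 1) • (volume : Measure ℝ)) R).toReal
    rw [hB, one_mul, div_le_div_iff₀ (by positivity) (by positivity)]
    simp only [Function.comp_apply] at hn
    calc t * ((n + 1) * (2 * R)) = t * (2 * R) * (n + 1) := by ring
      _ ≤ _ := by gcongr
  · change partitionFunction (((n : ℝ≥0) + 1) • (volume : Measure ℝ)) (Set.Icc 0 R)
      (hardCore R k) (-((t / (n + 1) : ℝ) : ℂ)) = 0
    have hn : ((n : ℝ) + 1) ≠ 0 := by positivity
    rw [← Complex.ofReal_neg, partitionFunction_eq hk]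
    have : (((n : ℝ≥0) + 1 : ℝ≥0) : ℝ) * -(t / (n + 1)) = -t := by
      push_cast
      field_simp
    rw [this, hroot, Complex.ofReal_zero]

end GibbsPP
end
end
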